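/- arXiv:1808.00417 — 2 statements merged into one kernel-verified Lean document; each statement's English description precedes it below -/
import Mathlib

section
/- Let P be a finite ground program, T a test case, B ⊆ P a background knowledge, and D*(P) the extended debugging program over P and B. Let Γ_P = D*(P) ∪ P_T ∪ P_A be incoherent and let R ⊆ P_A be a reason of incoherence, i.e., (Γ_P \ P_A) ∪ R is incoherent. Then any set of rules R₁ with R ⊊ R₁ ⊆ P_A is also a reason of incoherence, i.e., (Γ_P \ P_A) ∪ R₁ is incoherent. -/
/-- A ground disjunctive ASP rule: head atoms, positive body atoms, negative body atoms. -/
structure Rule (α : Type*) where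
  head : Finset α
  pos : Finset α
  neg : Finset α

/-- An interpretation `I` satisfies a rule `r`. -/
def satRule {α : Type*} (I : Set α) (r : Rule α) : Prop :=
  ((∀ b ∈ r.pos, b ∈ I) ∧ (∀ b ∈ r.neg, b ∉ I)) → ∃ a ∈ r.head, a ∈ I

/-- An interpretation `I` satisfies a program. -/
def satProg {α : Type*} (I : Set α) (Prg : Set (Rule α)) : Prop :=
  ∀ r ∈ Prg, satRule I r

/-- The reduct of a program with respect to an interpretation `I`. -/
def reduct {α : Type*} (Prg : Set (Rule α)) (I : Set α) : Set (Rule α) :=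
  {r' | ∃ r ∈ Prg, (∀ b ∈ r.neg, b ∉ I) ∧ r' = ⟨r.head, r.pos, ∅⟩}

/-- `I` is an answer set of `Prg`. -/
def isAnswerSet {α : Type*} (Prg : Set (Rule α)) (I : Set α) : Prop :=
  satProg I Prg ∧ ∀ J ⊂ I, ¬ satProg J (reduct Prg I)

/-- The set of answer sets of a program. -/
def AS {α : Type*} (Prg : Set (Rule α)) : Set (Set α) := {I | isAnswerSet Prg I}

/-- A program is coherent if it has at least one answer set. -/
def coherent {α : Type*} (Prg : Set (Rule α)) : Prop := (AS Prg).Nonempty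

/-- The fact `a ←`. -/
def fact {α : Type*} (a : α) : Rule α := ⟨{a}, ∅, ∅⟩

/-- Atom `a` occurs in rule `r`. -/
def occursIn {α : Type*} (a : α) (r : Rule α) : Prop :=
  a ∈ r.head ∨ a ∈ r.pos ∨ a ∈ r.neg

/-- The atoms occurring in a program. -/
def progAtoms {α : Type*} (Prg : Set (Rule α)) : Set α := {a | ∃ r ∈ Prg, occursIn a r}

/-- The constraint `← not a`. -/
def constraintNot {α : Type*} (a : α) : Rule α := ⟨∅, ∅, {a}⟩

/-- `P_T`: the constraints `← not a` for `a ∈ T`. -/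
def PT {α : Type*} (T : Set α) : Set (Rule α) := constraintNot '' T

/-- `P_A`: the facts `a ←` for `a ∈ A`. -/
def PA {α : Type*} (A : Set α) : Set (Rule α) := fact '' A

/-- The extended debugging program `D*(P)` over program `P` and background knowledge `B`,
with marker atoms `d r`, supporting atoms `s a`, and fresh atoms `f x` for `x ∈ A`. -/
def Dstar {α : Type*} [DecidableEq α] (P B : Set (Rule α))
    (d : Rule α → α) (s : α → α) (f : α → α) (A : Set α) : Set (Rule α) :=
  ((fun r => (⟨r.head, insert (d r) r.pos, r.neg⟩ : Rule α)) '' (P \ B))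
  ∪ ((fun a => (⟨{a}, ∅, {s a}⟩ : Rule α)) '' progAtoms P)
  ∪ B
  ∪ ((fun x => (⟨{x, f x}, ∅, ∅⟩ : Rule α)) '' A)

/-!
Minimality of an answer set `I` gives every atom `y ∈ I` a rule of the program whose body holds in
`I` and whose head meets `I` in `y` alone. In `Γ_P` each head containing the fresh atom `x_F` also
contains `x`, so an answer set never contains both. Hence, once `x` belongs to the answer set, the
choice rule `x ∨ x_F` already forces `x` in every model of the reduct below it. The fact `x ←` is
therefore redundant for minimality, and an answer set survives the deletion of such facts.
-/

section AnswerSets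

variable {α : Type*} {I J A : Set α} {Q Q' R : Set (Rule α)} {x y : α}

theorem satProg.mono (h : satProg I Q') (hsub : Q ⊆ Q') : satProg I Q :=
  fun r hr => h r (hsub hr)

theorem satProg_PA : satProg I (PA A) ↔ A ⊆ I := by
  simp [satProg, satRule, PA, fact, Set.subset_def]

theorem satProg_reduct_iff :
    satProg J (reduct Q I) ↔
      ∀ r ∈ Q, (∀ b ∈ r.neg, b ∉ I) → (∀ b ∈ r.pos, b ∈ J) → ∃ a ∈ r.head, a ∈ J := by
  constructor
  · intro h r hr hneg hpos
    exact h ⟨r.head, r.pos, ∅⟩ ⟨r, hr, hneg, rfl⟩ ⟨hpos, by simp⟩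
  · rintro h _ ⟨r, hr, hneg, rfl⟩ ⟨hpos, -⟩
    exact h r hr hneg hpos

theorem satProg_reduct_union :
    satProg J (reduct (Q ∪ R) I) ↔ satProg J (reduct Q I) ∧ satProg J (reduct R I) := by
  simp only [satProg_reduct_iff, Set.mem_union, or_imp, forall_and]

theorem satProg_reduct_PA : satProg J (reduct (PA A) I) ↔ A ⊆ J := by
  simp [satProg_reduct_iff, PA, fact, Set.subset_def]

theorem isAnswerSet.exists_rule_head_inter_eq_singleton (hI : isAnswerSet Q I) (hy : y ∈ I) :
    ∃ r ∈ Q, (∀ b ∈ r.pos, b ∈ I \ {y}) ∧ (∀ b ∈ r.neg, b ∉ I) ∧ ↑r.head ∩ I = {y} := by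
  by_contra! h
  refine hI.2 (I \ {y}) (Set.sdiff_singleton_ssubset.2 hy) (satProg_reduct_iff.2 ?_)
  intro r hr hneg hpos
  have hne : (↑r.head ∩ I).Nonempty := hI.1 r hr ⟨fun b hb => (hpos b hb).1, hneg⟩
  by_contra! hhead
  refine h r hr hpos hneg (Set.eq_singleton_iff_nonempty_unique_mem.2 ⟨hne, ?_⟩)
  rintro a ⟨ha, haI⟩
  by_contra hay
  exact hhead a ha ⟨haI, hay⟩

/-- Head domination: `x` accompanies `y` in every rule head of `Q`, so `Q` cannot support `y`
independently of `x`. In the debugging program `x` is a choice atom and `y` is its `x_F`. -/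
def HeadDominates (Q : Set (Rule α)) (x y : α) : Prop :=
  ∀ r ∈ Q, y ∈ r.head → x ∈ r.head

theorem HeadDominates.mono (h : HeadDominates Q' x y) (hsub : Q ⊆ Q') : HeadDominates Q x y :=
  fun r hr => h r (hsub hr)

theorem HeadDominates.union (hQ : HeadDominates Q x y) (hR : HeadDominates R x y) :
    HeadDominates (Q ∪ R) x y :=
  fun r hr => hr.elim (hQ r) (hR r)

theorem isAnswerSet.eq_of_headDominates (hI : isAnswerSet Q I) (hdom : HeadDominates Q x y)
    (hx : x ∈ I) (hy : y ∈ I) : x = y := by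
  obtain ⟨r, hr, -, -, hhead⟩ := hI.exists_rule_head_inter_eq_singleton hy
  have hyr : y ∈ ↑r.head ∩ I := hhead ▸ Set.mem_singleton y
  have hxr : x ∈ ↑r.head ∩ I := ⟨hdom r hr hyr.1, hx⟩
  exact Set.mem_singleton_iff.1 (hhead ▸ hxr)

end AnswerSets

section Choice

variable {α : Type*} [DecidableEq α] {I J A : Set α} {Q R : Set (Rule α)} {x y : α} {f : α → α}

/-- The choice rule `x ∨ y ←`, which `D*(P)` contains with `y = x_F` for each choice atom `x`. -/
def choiceRule (x y : α) : Rule α := ⟨{x, y}, ∅, ∅⟩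

theorem mem_or_mem_of_choiceRule_mem (hJ : satProg J (reduct Q I)) (hc : choiceRule x y ∈ Q) :
    x ∈ J ∨ y ∈ J := by
  simpa [choiceRule] using satProg_reduct_iff.1 hJ _ hc

theorem choiceRule_notMem_PA (hy : y ∉ A) : choiceRule x y ∉ PA A := by
  rintro ⟨a, ha, hax⟩
  have hhead : ({a} : Finset α) = {x, y} := congrArg Rule.head hax
  have hya : y ∈ ({a} : Finset α) := hhead ▸ by simp
  exact hy (Finset.mem_singleton.1 hya ▸ ha)

theorem isAnswerSet.union_of_subset_PA (hI : isAnswerSet (Q ∪ PA A) I) (hR : R ⊆ PA A)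
    (hchoice : ∀ x ∈ A, choiceRule x (f x) ∈ Q)
    (hdom : ∀ x ∈ A, HeadDominates (Q ∪ PA A) x (f x)) : isAnswerSet (Q ∪ R) I := by
  refine ⟨hI.1.mono (Set.union_subset_union_right Q hR), fun J hJ hsat => hI.2 J hJ ?_⟩
  have hQ : satProg J (reduct Q I) := (satProg_reduct_union.1 hsat).1
  refine satProg_reduct_union.2 ⟨hQ, satProg_reduct_PA.2 fun x hx => ?_⟩
  have hxI : x ∈ I := satProg_PA.1 (hI.1.mono Set.subset_union_right) hx
  rcases mem_or_mem_of_choiceRule_mem hQ (hchoice x hx) with hxJ | hfxJ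
  · exact hxJ
  · exact hI.eq_of_headDominates (hdom x hx) hxI (hJ.subset hfxJ) ▸ hfxJ

end Choice

section Debugging

variable {α : Type*} {P B : Set (Rule α)} {T A : Set α} {d : Rule α → α} {s f : α → α} {x y : α}

theorem headDominates_PT : HeadDominates (PT T) x y := by
  rintro _ ⟨a, -, rfl⟩ hy
  simp [constraintNot] at hy

theorem headDominates_PA (hy : y ∉ A) : HeadDominates (PA A) x y := by
  rintro _ ⟨a, ha, rfl⟩ hya
  exact absurd (Finset.mem_singleton.1 hya ▸ ha) hy

variable [DecidableEq α]

theorem choiceRule_mem_Dstar (hx : x ∈ A) : choiceRule x (f x) ∈ Dstar P B d s f A :=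
  Or.inr ⟨x, hx, rfl⟩

theorem headDominates_Dstar (hBP : B ⊆ P) (hfinj : Set.InjOn f A) (hx : x ∈ A) (hfxA : f x ∉ A)
    (hfxP : f x ∉ progAtoms P) : HeadDominates (Dstar P B d s f A) x (f x) := by
  rintro r (((⟨q, hq, rfl⟩ | ⟨a, ha, rfl⟩) | hr) | ⟨z, hz, rfl⟩) hfx
  · exact absurd ⟨q, hq.1, Or.inl hfx⟩ hfxP
  · exact absurd (Finset.mem_singleton.1 hfx ▸ ha) hfxP
  · exact absurd ⟨r, hBP hr, Or.inl hfx⟩ hfxP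
  · have hcases : f x = z ∨ f x = f z := by simpa using hfx
    rcases hcases with hfxz | hfxz
    · exact absurd (hfxz ▸ hz) hfxA
    · simp [hfinj hx hz hfxz]

theorem stmt_1_general (hBP : B ⊆ P) (hfinj : Set.InjOn f A) (hAf : Disjoint A (f '' A))
    (hfAfresh : Disjoint (f '' A) (progAtoms P)) {R R₁ : Set (Rule α)}
    (hReason : ¬ coherent (((Dstar P B d s f A ∪ PT T ∪ PA A) \ PA A) ∪ R))
    (hRR₁ : R ⊆ R₁) (hR₁PA : R₁ ⊆ PA A) :
    ¬ coherent (((Dstar P B d s f A ∪ PT T ∪ PA A) \ PA A) ∪ R₁) := by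
  rintro ⟨I, hI⟩
  obtain ⟨S, hSA, rfl⟩ := Set.subset_image_iff.1 hR₁PA
  have hfA : ∀ x ∈ A, f x ∉ A := fun x hx =>
    Set.disjoint_right.1 hAf (Set.mem_image_of_mem f hx)
  have hfP : ∀ x ∈ A, f x ∉ progAtoms P := fun x hx =>
    Set.disjoint_left.1 hfAfresh (Set.mem_image_of_mem f hx)
  have hdom : ∀ x ∈ A, HeadDominates (Dstar P B d s f A ∪ PT T ∪ PA A) x (f x) := fun x hx =>
    ((headDominates_Dstar hBP hfinj hx (hfA x hx) (hfP x hx)).union headDominates_PT).union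
      (headDominates_PA (hfA x hx))
  refine hReason ⟨I, isAnswerSet.union_of_subset_PA (f := f) hI hRR₁ ?_ ?_⟩
  · intro x hx
    exact ⟨Or.inl (Or.inl (choiceRule_mem_Dstar (hSA hx))), choiceRule_notMem_PA (hfA x (hSA hx))⟩
  · intro x hx
    exact (hdom x (hSA hx)).mono
      (Set.union_subset Set.sdiff_subset (hR₁PA.trans Set.subset_union_right))

end Debugging

theorem stmt_1 {α : Type*} [DecidableEq α]
    (P B : Set (Rule α)) (hPfin : P.Finite) (hBP : B ⊆ P)
    (T : Set α) (hT : T ⊆ progAtoms P)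
    (d : Rule α → α) (s : α → α) (f : α → α)
    (A : Set α) (hA : A = d '' (P \ B) ∪ s '' progAtoms P)
    (hdinj : Set.InjOn d (P \ B))
    (hsinj : Set.InjOn s (progAtoms P))
    (hfinj : Set.InjOn f A)
    (hds : Disjoint (d '' (P \ B)) (s '' progAtoms P))
    (hAf : Disjoint A (f '' A))
    (hAfresh : Disjoint A (progAtoms P))
    (hfAfresh : Disjoint (f '' A) (progAtoms P))
    (hGammaInc : ¬ coherent (Dstar P B d s f A ∪ PT T ∪ PA A))
    (R : Set (Rule α)) (hR : R ⊆ PA A)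
    (hReason : ¬ coherent (((Dstar P B d s f A ∪ PT T ∪ PA A) \ PA A) ∪ R))
    (R₁ : Set (Rule α)) (hR₁sub : R ⊂ R₁) (hR₁PA : R₁ ⊆ PA A) :
    ¬ coherent (((Dstar P B d s f A ∪ PT T ∪ PA A) \ PA A) ∪ R₁) := by
  exact stmt_1_general hBP hfinj hAf hfAfresh hReason hR₁sub.subset hR₁PA
end

section
/- Let Q be a ground program, a an atom (which may occur in Q), and a_F an atom that does not occur in any rule of Q. Then an interpretation I is an answer set of Q ∪ {a ∨ a_F ←} (where a ∨ a_F ← is the rule with head {a, a_F} and empty body) if and only if either (i) a ∈ I and I is an answer set of Q ∪ {a ←}, or (ii) a ∉ I, a_F ∈ I, and I \ {a_F} is an answer set of Q. That is, the choice rule {a}, read as the shortcut a ∨ a_F ← with a_F a fresh atom, lets a be freely true or false relative to Q. -/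
/-!
An answer set of `P` is a minimal model of the reduct of `P` with respect to itself. A model
`J ⊆ I` of a disjunctive fact `⋁ H ←` contains some `b ∈ H ∩ I`, so `I` is an answer set of `Q` plus
the disjunctive fact iff `I` meets `H` and, for each `b ∈ H ∩ I`, `I` is an answer set of `Q` plus
the fact `b ←`. Take `H = {a, aF}`. As an answer set contains only atoms that occur in the program,
an answer set of `Q ∪ {a ←}` contains the fresh atom `aF` only if `aF = a`; and adding the fact
`aF ←` to `Q` amounts to adding `aF` to the answer sets of `Q`.
-/

section Programs

variable {α : Type*} {P Q : Set (Rule α)} {r : Rule α} {I J : Set α}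

theorem satRule_congr (h : ∀ b, occursIn b r → (b ∈ I ↔ b ∈ J)) :
    satRule I r ↔ satRule J r := by
  have hhead : ∀ b ∈ r.head, (b ∈ I ↔ b ∈ J) := fun b hb => h b (.inl hb)
  have hpos : ∀ b ∈ r.pos, (b ∈ I ↔ b ∈ J) := fun b hb => h b (.inr (.inl hb))
  have hneg : ∀ b ∈ r.neg, (b ∉ I ↔ b ∉ J) := fun b hb => not_congr (h b (.inr (.inr hb)))
  exact imp_congr (and_congr (forall₂_congr hpos) (forall₂_congr hneg))
    (exists_congr fun b => and_congr_right (hhead b))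

theorem satProg_congr (h : ∀ b ∈ progAtoms P, (b ∈ I ↔ b ∈ J)) :
    satProg I P ↔ satProg J P :=
  forall₂_congr fun r hr => satRule_congr fun b hb => h b ⟨r, hr, hb⟩

theorem satProg_union : satProg I (P ∪ Q) ↔ satProg I P ∧ satProg I Q := by
  simp only [satProg, Set.mem_union, or_imp, forall_and]

theorem satProg_singleton : satProg I {r} ↔ satRule I r := by
  simp only [satProg, Set.mem_singleton_iff, forall_eq]

theorem progAtoms_union : progAtoms (P ∪ Q) = progAtoms P ∪ progAtoms Q := by
  ext b
  simp only [progAtoms, Set.mem_union, Set.mem_ofPred_eq, or_and_right, exists_or]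

theorem progAtoms_singleton_fact (a : α) : progAtoms {fact a} = {a} := by
  ext b
  simp [progAtoms, occursIn, fact]

theorem progAtoms_reduct_subset : progAtoms (reduct P I) ⊆ progAtoms P := by
  rintro b ⟨_, ⟨r, hr, -, rfl⟩, hb⟩
  exact ⟨r, hr, hb.imp_right fun h => .inl (h.resolve_right (Finset.notMem_empty b))⟩

theorem reduct_congr (h : ∀ b ∈ progAtoms P, (b ∈ I ↔ b ∈ J)) : reduct P I = reduct P J := by
  ext r'
  refine exists_congr fun r => and_congr_right fun hr => and_congr_left' ?_
  exact forall₂_congr fun b hb => not_congr (h b ⟨r, hr, .inr (.inr hb)⟩)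

theorem reduct_union : reduct (P ∪ Q) I = reduct P I ∪ reduct Q I := by
  ext r'
  simp only [reduct, Set.mem_union, Set.mem_ofPred_eq, or_and_right, exists_or]

theorem reduct_eq_self_of_neg_eq_empty (h : ∀ r ∈ P, r.neg = ∅) : reduct P I = P := by
  ext r'
  constructor
  · rintro ⟨r, hr, -, rfl⟩
    rwa [← h r hr]
  · intro hr
    refine ⟨r', hr, ?_, ?_⟩
    · simp [h r' hr]
    · rw [← h r' hr]

theorem satProg_reduct_congr (h : ∀ b ∈ progAtoms P, (b ∈ I ↔ b ∈ J)) (K : Set α) :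
    satProg I (reduct P K) ↔ satProg J (reduct P K) :=
  satProg_congr fun b hb => h b (progAtoms_reduct_subset hb)

theorem satProg_reduct_self : satProg I (reduct P I) ↔ satProg I P := by
  constructor
  · rintro h r hr ⟨hpos, hneg⟩
    exact h ⟨r.head, r.pos, ∅⟩ ⟨r, hr, hneg, rfl⟩ ⟨hpos, by simp⟩
  · rintro h _ ⟨r, hr, hneg, rfl⟩ ⟨hpos, -⟩
    exact h r hr ⟨hpos, hneg⟩

theorem isAnswerSet_iff_minimal :
    isAnswerSet P I ↔ Minimal (fun J => satProg J (reduct P I)) I := by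
  rw [Set.minimal_iff_forall_ssubset, isAnswerSet, satProg_reduct_self]

theorem isAnswerSet.subset_progAtoms (h : isAnswerSet P I) : I ⊆ progAtoms P := by
  rw [isAnswerSet_iff_minimal] at h
  have hsat : satProg (I ∩ progAtoms P) (reduct P I) :=
    (satProg_reduct_congr (fun _ hb => (and_iff_left hb).symm) I).1 h.prop
  exact (h.le_of_le hsat Set.inter_subset_left).trans Set.inter_subset_right

end Programs

section DisjunctiveFacts

variable {α : Type*} {Q : Set (Rule α)} {H : Finset α} {x : α} {I J : Set α}

theorem satRule_disjunctiveFact : satRule I ⟨H, ∅, ∅⟩ ↔ ∃ b ∈ H, b ∈ I := by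
  simp [satRule]

theorem satProg_reduct_union_disjunctiveFact :
    satProg J (reduct (Q ∪ {⟨H, ∅, ∅⟩}) I) ↔ satProg J (reduct Q I) ∧ ∃ b ∈ H, b ∈ J := by
  have hself : reduct {(⟨H, ∅, ∅⟩ : Rule α)} I = {⟨H, ∅, ∅⟩} :=
    reduct_eq_self_of_neg_eq_empty (by simp)
  rw [reduct_union, hself, satProg_union, satProg_singleton, satRule_disjunctiveFact]

theorem satProg_reduct_union_fact :
    satProg J (reduct (Q ∪ {fact x}) I) ↔ satProg J (reduct Q I) ∧ x ∈ J := by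
  simp only [fact, satProg_reduct_union_disjunctiveFact, Finset.mem_singleton, exists_eq_left]

theorem isAnswerSet_union_disjunctiveFact_iff :
    isAnswerSet (Q ∪ {⟨H, ∅, ∅⟩}) I ↔
      (∃ b ∈ H, b ∈ I) ∧ ∀ b ∈ H, b ∈ I → isAnswerSet (Q ∪ {fact b}) I := by
  simp only [isAnswerSet_iff_minimal, satProg_reduct_union_disjunctiveFact,
    satProg_reduct_union_fact]
  constructor
  · intro h
    refine ⟨h.prop.2, fun b hbH hbI => ⟨⟨h.prop.1, hbI⟩, fun J hJ hJI => ?_⟩⟩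
    exact h.le_of_le ⟨hJ.1, b, hbH, hJ.2⟩ hJI
  · rintro ⟨⟨c, hcH, hcI⟩, h⟩
    refine ⟨⟨(h c hcH hcI).prop.1, c, hcH, hcI⟩, ?_⟩
    rintro J ⟨hJ, b, hbH, hbJ⟩ hJI
    exact (h b hbH (hJI hbJ)).le_of_le ⟨hJ, hbJ⟩ hJI

theorem isAnswerSet_union_disjunctiveFact_pair_iff [DecidableEq α] {a b : α} :
    isAnswerSet (Q ∪ {⟨{a, b}, ∅, ∅⟩}) I ↔
      (a ∈ I ∨ b ∈ I) ∧
        (a ∈ I → isAnswerSet (Q ∪ {fact a}) I) ∧ (b ∈ I → isAnswerSet (Q ∪ {fact b}) I) := by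
  simp only [isAnswerSet_union_disjunctiveFact_iff, Finset.mem_insert, Finset.mem_singleton,
    exists_eq_or_imp, exists_eq_left, forall_eq_or_imp, forall_eq]

theorem isAnswerSet.eq_of_mem_of_notMem_progAtoms {a : α} (h : isAnswerSet (Q ∪ {fact a}) I)
    (hx : x ∉ progAtoms Q) (hxI : x ∈ I) : x = a := by
  have hxQ : x ∈ progAtoms Q ∪ {a} := by
    simpa only [progAtoms_union, progAtoms_singleton_fact] using h.subset_progAtoms hxI
  exact hxQ.resolve_left hx

theorem minimal_and_mem_iff_minimal_sdiff_singleton {p : Set α → Prop}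
    (hp : ∀ J, p (J \ {x}) ↔ p J) :
    Minimal (fun J => p J ∧ x ∈ J) I ↔ x ∈ I ∧ Minimal p (I \ {x}) := by
  constructor
  · intro h
    have hxI : x ∈ I := h.prop.2
    refine ⟨hxI, (hp I).2 h.prop.1, fun K hK hKI => ?_⟩
    have hxK : x ∉ K := fun hxK => (hKI hxK).2 rfl
    have hinsert : p (insert x K) := by rwa [← hp, Set.insert_sdiff_self_of_notMem hxK]
    have hsub : insert x K ⊆ I := Set.insert_subset hxI (hKI.trans Set.sdiff_subset)
    exact Set.sdiff_singleton_subset_iff.2 (h.le_of_le ⟨hinsert, Set.mem_insert x K⟩ hsub)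
  · rintro ⟨hxI, h⟩
    refine ⟨⟨(hp I).1 h.prop, hxI⟩, ?_⟩
    rintro J ⟨hJ, hxJ⟩ hJI
    have hsub : I \ {x} ⊆ J \ {x} :=
      h.le_of_le ((hp J).2 hJ) (Set.sdiff_subset_sdiff_left hJI)
    have hinsert : I ⊆ insert x J := Set.sdiff_singleton_subset_iff.1 (hsub.trans Set.sdiff_subset)
    rwa [Set.insert_eq_of_mem hxJ] at hinsert

theorem isAnswerSet_union_fact_iff_of_notMem_progAtoms (hx : x ∉ progAtoms Q) :
    isAnswerSet (Q ∪ {fact x}) I ↔ x ∈ I ∧ isAnswerSet Q (I \ {x}) := by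
  have hagree : ∀ J : Set α, ∀ b ∈ progAtoms Q, (b ∈ J \ {x} ↔ b ∈ J) :=
    fun J b hb => and_iff_left (ne_of_mem_of_not_mem hb hx)
  simp only [isAnswerSet_iff_minimal, satProg_reduct_union_fact, reduct_congr (hagree I)]
  exact minimal_and_mem_iff_minimal_sdiff_singleton fun J => satProg_reduct_congr (hagree J) I

end DisjunctiveFacts

theorem stmt_12 {α : Type*} [DecidableEq α]
    (Q : Set (Rule α)) (a aF : α)
    (hfresh : ∀ r ∈ Q, ¬ occursIn aF r)
    (I : Set α) :
    isAnswerSet (Q ∪ {(⟨{a, aF}, ∅, ∅⟩ : Rule α)}) I ↔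
      (a ∈ I ∧ isAnswerSet (Q ∪ {fact a}) I) ∨
      (a ∉ I ∧ aF ∈ I ∧ isAnswerSet Q (I \ {aF})) := by
  have hfresh' : aF ∉ progAtoms Q := fun ⟨r, hr, h⟩ => hfresh r hr h
  rw [isAnswerSet_union_disjunctiveFact_pair_iff]
  by_cases ha : a ∈ I
  · simp only [ha, true_or, true_imp_iff, true_and, not_true_eq_false, false_and, or_false]
    refine and_iff_left_of_imp fun h haF => ?_
    rwa [h.eq_of_mem_of_notMem_progAtoms hfresh' haF]
  · simp only [ha, false_or, false_imp_iff, true_and, false_and, not_false_eq_true]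
    refine and_congr_right fun haF => ?_
    rw [imp_iff_right haF, isAnswerSet_union_fact_iff_of_notMem_progAtoms hfresh',
      and_iff_right haF]
end
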